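/- Expansion of the relative fractional perimeter of small balls: for Ω ⊂ ℝ^N bounded open, Θ ⊂ Ω compact, s ∈ (0,1/2), and x̄ ∈ Θ/ε with B_1(x̄) ⊂ Ω/ε, one has P_s(B_1(x̄), Ω/ε) = P_s(B_1(x̄)) − ω_N ε^{2s} V_Ω(ε x̄) + O(ε^{1+2s}) as ε → 0, where ω_N = |B_1| and V_Ω(x) = ∫_{Ω^c} |x−y|^{−(N+2s)} dy, with the O-constant uniform over x̄ ∈ Θ/ε. -/

import Mathlib

open MeasureTheory Pointwise

variable (N : ℕ) (s : ℝ)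

/-- Relative fractional `s`-perimeter, real-valued. -/
noncomputable def relPerimeterR (E Ω : Set (EuclideanSpace ℝ (Fin N))) : ℝ :=
  ∫ x in E, ∫ y in Ω \ E, ‖x - y‖ ^ (-((N : ℝ) + 2*s))

/-- The nonlocal potential `V_Ω(x) = ∫_{Ωᶜ} |x-y|^{-(N+2s)} dy`. -/
noncomputable def nonlocalPotential (Ω : Set (EuclideanSpace ℝ (Fin N)))
    (x : EuclideanSpace ℝ (Fin N)) : ℝ :=
  ∫ y in Ωᶜ, ‖x - y‖ ^ (-((N : ℝ) + 2*s))

/-! Since `B_1(x) ⊆ Ω/ε`, the two perimeters differ by the interaction of `B_1(x)` with `(Ω/ε)ᶜ`,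
i.e. by the integral over `B_1(x)` of the potential of `(Ω/ε)ᶜ`. All of `(Ω/ε)ᶜ` lies at distance at
least `δ/ε` from `x`, and there moving `x` by at most `1` changes the kernel by
`O(|x - y|^{-(N+2s+1)})`, whose integral over `{|x - y| ≥ δ/ε}` is of order `(ε/δ)^{1+2s}`. So the
potential may be evaluated at the centre of the ball, where scaling turns it into
`ε^{2s} V_Ω(εx)`. -/

section KernelPotential

open Metric Set Module

theorem pow_sub_one_mul_rpow_neg {n : ℕ} (hn : 0 < n) {t : ℝ} (ht : 0 < t) (p : ℝ) :
    t ^ (n - 1) * t ^ (-p) = t ^ (n - p - 1) := by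
  rw [← Real.rpow_natCast, ← Real.rpow_add ht, Nat.cast_pred hn]
  ring_nf

theorem abs_rpow_neg_sub_rpow_neg_le {p a b : ℝ} (hp : 0 ≤ p) (hb : 0 < b)
    (hab : |a - b| ≤ b / 2) :
    |a ^ (-p) - b ^ (-p)| ≤ p * 2 ^ (p + 1) * b ^ (-(p + 1)) * |a - b| := by
  have pos_of_mem {t : ℝ} (ht : t ∈ Ici (b / 2)) : 0 < t := (half_pos hb).trans_le ht
  have norm_deriv_le : ∀ t ∈ Ici (b / 2),
      ‖-p * t ^ (-p - 1)‖ ≤ p * 2 ^ (p + 1) * b ^ (-(p + 1)) := fun t ht ↦ by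
    calc ‖-p * t ^ (-p - 1)‖ = p * t ^ (-(p + 1)) := by
          rw [norm_mul, norm_neg, Real.norm_of_nonneg hp,
            Real.norm_of_nonneg (Real.rpow_nonneg (pos_of_mem ht).le _), neg_add']
      _ ≤ p * (b / 2) ^ (-(p + 1)) := by
          gcongr ?_ * ?_
          exact Real.rpow_le_rpow_of_nonpos (half_pos hb) ht (by linarith)
      _ = p * 2 ^ (p + 1) * b ^ (-(p + 1)) := by
          rw [Real.div_rpow hb.le zero_le_two, Real.rpow_neg zero_le_two, div_inv_eq_mul]
          ring
  have ha : b / 2 ≤ a := by linarith [(abs_le.1 hab).1]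
  exact (convex_Ici (b / 2)).norm_image_sub_le_of_norm_hasDerivWithin_le
    (fun t ht ↦ (Real.hasDerivAt_rpow_const (Or.inl (pos_of_mem ht).ne')).hasDerivWithinAt)
    norm_deriv_le (half_le_self hb.le) ha

theorem ball_div_subset_inv_smul {E : Type*} [NormedAddCommGroup E] [NormedSpace ℝ E] {ε δ : ℝ}
    (hε : 0 < ε) {U : Set E} {x : E} (h : ball (ε • x) δ ⊆ U) : ball x (δ / ε) ⊆ ε⁻¹ • U := by
  rw [subset_smul_set_iff₀ (inv_ne_zero hε.ne'), inv_inv, _root_.smul_ball hε.ne',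
    Real.norm_of_nonneg hε.le, mul_div_cancel₀ _ hε.ne']
  exact h

section Definitions

variable {E : Type*} [SeminormedAddCommGroup E] [MeasurableSpace E] (μ : Measure E)

/-- The potential at `x` of the set `A` for the kernel `|x - y|^{-p}`. With `p = N + 2s` and
`A = Ωᶜ` it is `nonlocalPotential N s Ω`. -/
noncomputable def kernelPotential (p : ℝ) (A : Set E) (x : E) : ℝ :=
  ∫ y in A, ‖x - y‖ ^ (-p) ∂μ

/-- The interaction energy of the sets `A` and `B` for the kernel `|x - y|^{-p}`. With `p = N + 2s`
and `B = Ω \ A` it is the relative perimeter `relPerimeterR N s A Ω`. -/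
noncomputable def kernelInteraction (p : ℝ) (A B : Set E) : ℝ :=
  ∫ x in A, kernelPotential μ p B x ∂μ

variable {μ} in
theorem kernelPotential_nonneg (p : ℝ) (A : Set E) (x : E) : 0 ≤ kernelPotential μ p A x :=
  integral_nonneg fun _ ↦ by positivity

variable {μ} in
theorem stronglyMeasurable_kernelPotential [SecondCountableTopology E] [OpensMeasurableSpace E]
    [SFinite μ] (p : ℝ) (A : Set E) :
    StronglyMeasurable (kernelPotential μ p A) :=
  have continuous_norm_sub : Continuous fun z : E × E ↦ ‖z.1 - z.2‖ := by fun_prop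
  StronglyMeasurable.integral_prod_right
    (continuous_norm_sub.measurable.pow_const (-p)).stronglyMeasurable

end Definitions

theorem indicator_compl_ball_fun_norm_sub {E F : Type*} [SeminormedAddCommGroup E] [Zero F]
    (f : ℝ → F) (x : E) (r : ℝ) :
    (ball x r)ᶜ.indicator (fun y ↦ f ‖x - y‖) = fun y ↦ (Ici r).indicator f ‖x - y‖ := by
  ext y
  simp [indicator, dist_eq_norm']

theorem compl_ball_subset_compl_ball_sub_dist {X : Type*} [PseudoMetricSpace X]
    (c x : X) (r : ℝ) : (ball c r)ᶜ ⊆ (ball x (r - dist x c))ᶜ :=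
  compl_subset_compl.2 (ball_subset_ball' (sub_add_cancel _ _).le)

variable {E : Type*} [NormedAddCommGroup E] [NormedSpace ℝ E] [FiniteDimensional ℝ E]
  [MeasurableSpace E] [BorelSpace E] (μ : Measure E) [μ.IsAddHaarMeasure]

section Radial

variable [Nontrivial E] {F : Type*} [NormedAddCommGroup F] [NormedSpace ℝ F]

theorem integrableOn_fun_norm_sub_compl_ball {f : ℝ → F} {r : ℝ} (hr : 0 < r) (x : E) :
    IntegrableOn (fun y ↦ f ‖x - y‖) (ball x r)ᶜ μ ↔
      IntegrableOn (fun t ↦ t ^ (finrank ℝ E - 1) • f t) (Ioi r) := by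
  rw [← integrable_indicator_iff measurableSet_ball.compl, indicator_compl_ball_fun_norm_sub,
    integrable_comp_sub_left (fun z ↦ (Ici r).indicator f ‖z‖), integrable_fun_norm_addHaar]
  simp only [← indicator_smul (Ici r) (fun t ↦ t ^ (finrank ℝ E - 1))]
  rw [IntegrableOn, integrable_indicator_iff measurableSet_Ici, IntegrableOn,
    Measure.restrict_restrict measurableSet_Ici,
    inter_eq_left.2 (Ici_subset_Ioi.2 hr)]
  exact integrableOn_Ici_iff_integrableOn_Ioi

theorem setIntegral_fun_norm_sub_compl_ball (f : ℝ → F) {r : ℝ} (hr : 0 < r) (x : E) :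
    ∫ y in (ball x r)ᶜ, f ‖x - y‖ ∂μ =
      finrank ℝ E • μ.real (ball 0 1) • ∫ t in Ioi r, t ^ (finrank ℝ E - 1) • f t := by
  rw [← integral_indicator measurableSet_ball.compl, indicator_compl_ball_fun_norm_sub,
    integral_sub_left_eq_self (fun z ↦ (Ici r).indicator f ‖z‖), integral_fun_norm_addHaar]
  simp only [← indicator_smul (Ici r) (fun t ↦ t ^ (finrank ℝ E - 1))]
  rw [setIntegral_indicator measurableSet_Ici,
    inter_eq_right.2 (Ici_subset_Ioi.2 hr), integral_Ici_eq_integral_Ioi]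

theorem integrableOn_ball_fun_dist {f : ℝ → F} {r : ℝ} (c : E) :
    IntegrableOn (fun x ↦ f (dist x c)) (ball c r) μ ↔
      IntegrableOn (fun t ↦ t ^ (finrank ℝ E - 1) • f t) (Ioo 0 r) := by
  have preimage_ball : (· - c) ⁻¹' ball 0 r = ball c r := by
    ext x
    simp [dist_eq_norm]
  rw [← integrableOn_fun_norm_addHaar μ,
    ← (measurePreserving_sub_right μ c).integrableOn_comp_preimage (s := ball 0 r)
      (Homeomorph.subRight c).measurableEmbedding, preimage_ball]
  simp only [Function.comp_def, dist_eq_norm]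

end Radial

theorem integrableOn_ball_sub_dist_rpow [Nontrivial E] {q : ℝ} (hq : -1 < q) (c : E) (r : ℝ) :
    IntegrableOn (fun x ↦ (r - dist x c) ^ q) (ball c r) μ := by
  obtain hr | hr := le_or_gt r 0
  · simp [ball_eq_empty.2 hr]
  have intervalIntegrable_rpow : IntervalIntegrable (fun t ↦ (r - t) ^ q) volume 0 r := by
    simpa using
      ((intervalIntegral.intervalIntegrable_rpow' hq (a := 0) (b := r)).comp_sub_left r).symm
  exact (integrableOn_ball_fun_dist μ c).2 <|
    IntegrableOn.continuousOn_mul_of_subset (by fun_prop)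
      ((intervalIntegrable_iff_integrableOn_Ioo_of_le hr.le).1 intervalIntegrable_rpow)
      isCompact_Icc measurableSet_Ioo Ioo_subset_Icc_self

variable {μ} {p r R : ℝ} {A B : Set E} {c x : E}

theorem kernelPotential_smul (p : ℝ) {ε : ℝ} (hε : 0 < ε) (A : Set E) (x : E) :
    kernelPotential μ p (ε • A) (ε • x) = ε ^ (finrank ℝ E - p) * kernelPotential μ p A x := by
  have change_of_variables :=
    Measure.setIntegral_comp_smul_of_pos μ (fun y ↦ ‖ε • x - y‖ ^ (-p)) A hε
  simp only [← smul_sub, norm_smul, Real.norm_of_nonneg hε.le,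
    Real.mul_rpow hε.le (norm_nonneg _), integral_const_mul, smul_eq_mul] at change_of_variables
  rw [eq_inv_mul_iff_mul_eq₀ (pow_pos hε _).ne'] at change_of_variables
  rw [kernelPotential, ← change_of_variables, sub_eq_add_neg, Real.rpow_add hε, Real.rpow_natCast,
    mul_assoc, kernelPotential]

theorem kernelPotential_compl_inv_smul (p : ℝ) {ε : ℝ} (hε : 0 < ε) (U : Set E) (x : E) :
    kernelPotential μ p (ε⁻¹ • U)ᶜ x =
      ε ^ (p - finrank ℝ E) * kernelPotential μ p Uᶜ (ε • x) := by
  have smul_compl : ε⁻¹ • Uᶜ = (ε⁻¹ • U)ᶜ := by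
    simp only [← preimage_smul₀ hε.ne', preimage_compl]
  rw [← smul_compl, ← inv_smul_smul₀ hε.ne' x, kernelPotential_smul p (inv_pos.2 hε),
    smul_inv_smul₀ hε.ne', ← Real.rpow_neg_eq_inv_rpow, neg_sub]

variable [Nontrivial E]

theorem integrableOn_norm_sub_rpow_neg (hp : finrank ℝ E < p) (hr : 0 < r)
    (hA : A ⊆ (ball x r)ᶜ) : IntegrableOn (fun y ↦ ‖x - y‖ ^ (-p)) A μ := by
  refine ((integrableOn_fun_norm_sub_compl_ball μ (f := (· ^ (-p))) hr x).2 ?_).mono_set hA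
  exact (integrableOn_Ioi_rpow_of_lt (by linarith) hr).congr_fun
    (fun t ht ↦ (pow_sub_one_mul_rpow_neg finrank_pos (hr.trans ht) p).symm) measurableSet_Ioi

theorem kernelPotential_compl_ball (hp : finrank ℝ E < p) (hr : 0 < r) (x : E) :
    kernelPotential μ p (ball x r)ᶜ x =
      finrank ℝ E * μ.real (ball 0 1) / (p - finrank ℝ E) * r ^ (finrank ℝ E - p) := by
  have radial_integral : ∫ t in Ioi r, t ^ (finrank ℝ E - 1) * t ^ (-p) =
      r ^ (finrank ℝ E - p) / (p - finrank ℝ E) := by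
    rw [setIntegral_congr_fun measurableSet_Ioi fun t ht ↦
        pow_sub_one_mul_rpow_neg finrank_pos (hr.trans ht) p,
      integral_Ioi_rpow_of_lt (by linarith) hr, sub_add_cancel, neg_div, ← div_neg, neg_sub]
  rw [kernelPotential, setIntegral_fun_norm_sub_compl_ball μ (· ^ (-p)) hr]
  simp only [nsmul_eq_mul, smul_eq_mul, radial_integral]
  ring

theorem kernelPotential_le (hp : finrank ℝ E < p) (hr : 0 < r) (hA : A ⊆ (ball x r)ᶜ) :
    kernelPotential μ p A x ≤
      finrank ℝ E * μ.real (ball 0 1) / (p - finrank ℝ E) * r ^ (finrank ℝ E - p) :=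
  (setIntegral_mono_set (integrableOn_norm_sub_rpow_neg hp hr subset_rfl)
    (.of_forall fun _ ↦ by positivity) hA.eventuallyLE).trans_eq
    (kernelPotential_compl_ball hp hr x)

theorem kernelPotential_union (hp : finrank ℝ E < p) (hr : 0 < r) (hA : A ⊆ (ball x r)ᶜ)
    (hB : B ⊆ (ball x r)ᶜ) (hAB : Disjoint A B) (hBm : MeasurableSet B) :
    kernelPotential μ p (A ∪ B) x = kernelPotential μ p A x + kernelPotential μ p B x :=
  setIntegral_union hAB hBm (integrableOn_norm_sub_rpow_neg hp hr hA)
    (integrableOn_norm_sub_rpow_neg hp hr hB)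

theorem integrableOn_ball_kernelPotential (hp : finrank ℝ E < p) (hp' : p < finrank ℝ E + 1)
    (hA : A ⊆ (ball c r)ᶜ) : IntegrableOn (kernelPotential μ p A) (ball c r) μ := by
  refine ((integrableOn_ball_sub_dist_rpow μ (q := finrank ℝ E - p) (by linarith) c r).const_mul
    (finrank ℝ E * μ.real (ball 0 1) / (p - finrank ℝ E))).mono'
    (stronglyMeasurable_kernelPotential p A).aestronglyMeasurable ?_
  filter_upwards [ae_restrict_mem measurableSet_ball] with x hx
  rw [Real.norm_of_nonneg (kernelPotential_nonneg p A x)]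
  exact kernelPotential_le hp (sub_pos.2 hx)
    (hA.trans (compl_ball_subset_compl_ball_sub_dist c x r))

theorem kernelInteraction_ball_union (hp : finrank ℝ E < p) (hp' : p < finrank ℝ E + 1)
    (hA : A ⊆ (ball c r)ᶜ) (hB : B ⊆ (ball c r)ᶜ) (hAB : Disjoint A B) (hBm : MeasurableSet B) :
    kernelInteraction μ p (ball c r) (A ∪ B) =
      kernelInteraction μ p (ball c r) A + kernelInteraction μ p (ball c r) B := by
  have far (x : E) := compl_ball_subset_compl_ball_sub_dist c x r
  rw [kernelInteraction, setIntegral_congr_fun measurableSet_ball fun x hx ↦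
    kernelPotential_union hp (sub_pos.2 hx) (hA.trans (far x)) (hB.trans (far x)) hAB hBm]
  exact integral_add (integrableOn_ball_kernelPotential hp hp' hA)
    (integrableOn_ball_kernelPotential hp hp' hB)

theorem abs_kernelPotential_sub_le (hp : finrank ℝ E < p) (hR : 0 < R) (hA : A ⊆ (ball c R)ᶜ)
    (hx : dist x c ≤ R / 2) :
    |kernelPotential μ p A x - kernelPotential μ p A c| ≤
      p * 2 ^ (p + 1) * dist x c * kernelPotential μ (p + 1) A c := by
  have hp₀ : 0 ≤ p := (Nat.cast_nonneg _).trans hp.le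
  have far_x : A ⊆ (ball x (R / 2))ᶜ :=
    hA.trans <| compl_subset_compl.2 <| ball_subset_ball' (by linarith)
  have kernel_sub_le : ∀ y ∈ (ball c R)ᶜ, ‖‖x - y‖ ^ (-p) - ‖c - y‖ ^ (-p)‖ ≤
      p * 2 ^ (p + 1) * dist x c * ‖c - y‖ ^ (-(p + 1)) := fun y hy ↦ by
    have hy : R ≤ ‖c - y‖ := by simpa [dist_eq_norm'] using hy
    have norm_sub_le : |‖x - y‖ - ‖c - y‖| ≤ dist x c := by
      simpa [dist_eq_norm] using abs_norm_sub_norm_le (x - y) (c - y)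
    calc ‖‖x - y‖ ^ (-p) - ‖c - y‖ ^ (-p)‖
        ≤ p * 2 ^ (p + 1) * ‖c - y‖ ^ (-(p + 1)) * |‖x - y‖ - ‖c - y‖| :=
          abs_rpow_neg_sub_rpow_neg_le hp₀ (hR.trans_le hy) (by linarith)
      _ ≤ p * 2 ^ (p + 1) * ‖c - y‖ ^ (-(p + 1)) * dist x c := by gcongr
      _ = p * 2 ^ (p + 1) * dist x c * ‖c - y‖ ^ (-(p + 1)) := by ring
  simp only [kernelPotential]
  rw [← integral_sub (integrableOn_norm_sub_rpow_neg hp (half_pos hR) far_x)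
    (integrableOn_norm_sub_rpow_neg hp hR hA), ← integral_const_mul]
  exact norm_integral_le_of_norm_le
    ((integrableOn_norm_sub_rpow_neg (hp.trans (lt_add_one p)) hR hA).const_mul _)
    (ae_restrict_of_ae_restrict_of_subset hA
      (ae_restrict_of_forall_mem measurableSet_ball.compl kernel_sub_le))

theorem abs_kernelInteraction_ball_sub_le (hp : finrank ℝ E < p) (hR : 0 < R) (hr : r ≤ R / 2)
    (hA : A ⊆ (ball c R)ᶜ) :
    |kernelInteraction μ p (ball c r) A - μ.real (ball c r) * kernelPotential μ p A c| ≤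
      p * 2 ^ (p + 1) * r * kernelPotential μ (p + 1) A c * μ.real (ball c r) := by
  have hp₀ : 0 ≤ p := (Nat.cast_nonneg _).trans hp.le
  have potential_sub_le : ∀ x ∈ ball c r, ‖kernelPotential μ p A x - kernelPotential μ p A c‖ ≤
      p * 2 ^ (p + 1) * r * kernelPotential μ (p + 1) A c := fun x hx ↦ by
    have hxr : dist x c ≤ r := (mem_ball.1 hx).le
    refine (abs_kernelPotential_sub_le hp hR hA (hxr.trans hr)).trans ?_
    gcongr
    exact kernelPotential_nonneg _ _ _
  have integrable_const : IntegrableOn (fun _ ↦ kernelPotential μ p A c) (ball c r) μ :=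
    integrableOn_const measure_ball_lt_top.ne
  have integrable_sub :
      IntegrableOn (fun x ↦ kernelPotential μ p A x - kernelPotential μ p A c) (ball c r) μ :=
    Measure.integrableOn_of_bounded measure_ball_lt_top.ne
      ((stronglyMeasurable_kernelPotential p A).sub
        stronglyMeasurable_const).aestronglyMeasurable
      (ae_restrict_of_forall_mem measurableSet_ball potential_sub_le)
  have integrable_potential : IntegrableOn (kernelPotential μ p A) (ball c r) μ :=
    (integrable_sub.add integrable_const).congr (.of_forall fun _ ↦ sub_add_cancel _ _)
  rw [kernelInteraction, ← smul_eq_mul, ← setIntegral_const,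
    ← integral_sub integrable_potential integrable_const]
  exact norm_setIntegral_le_of_norm_le_const measure_ball_lt_top potential_sub_le

theorem kernelInteraction_ball_sdiff_sub_univ (hp : finrank ℝ E < p) (hp' : p < finrank ℝ E + 1)
    {U : Set E} (hU : MeasurableSet U) (hc : ball c r ⊆ U) :
    kernelInteraction μ p (ball c r) (U \ ball c r) -
      kernelInteraction μ p (ball c r) (univ \ ball c r) =
        -kernelInteraction μ p (ball c r) Uᶜ := by
  have univ_sdiff : univ \ ball c r = U \ ball c r ∪ Uᶜ := by
    rw [← sdiff_union_sdiff_cancel (subset_univ U) hc, compl_eq_univ_sdiff, union_comm]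
  rw [univ_sdiff, kernelInteraction_ball_union hp hp' (fun _ hy ↦ hy.2) (compl_subset_compl.2 hc)
    (disjoint_compl_right.mono_left sdiff_subset) hU.compl]
  ring

theorem abs_kernelInteraction_ball_sdiff_sub_univ_add_le (hp : finrank ℝ E < p)
    (hp' : p < finrank ℝ E + 1) {U : Set E} (hU : MeasurableSet U) (hR : 0 < R) (hr₀ : 0 ≤ r)
    (hr : r ≤ R / 2) (hc : ball c R ⊆ U) :
    |kernelInteraction μ p (ball c r) (U \ ball c r) -
        kernelInteraction μ p (ball c r) (univ \ ball c r) +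
        μ.real (ball c r) * kernelPotential μ p Uᶜ c| ≤
      p * 2 ^ (p + 1) * r * (finrank ℝ E * μ.real (ball 0 1) / (p + 1 - finrank ℝ E) *
        R ^ (finrank ℝ E - (p + 1))) * μ.real (ball c r) := by
  have hp₀ : 0 ≤ p := (Nat.cast_nonneg _).trans hp.le
  have hfar : Uᶜ ⊆ (ball c R)ᶜ := compl_subset_compl.2 hc
  rw [kernelInteraction_ball_sdiff_sub_univ hp hp' hU ((ball_subset_ball (by linarith)).trans hc),
    neg_add_eq_sub, abs_sub_comm]
  refine (abs_kernelInteraction_ball_sub_le hp hR hr hfar).trans ?_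
  gcongr
  exact kernelPotential_le (hp.trans (lt_add_one p)) hR hfar

variable (μ) in
theorem relPerimeter_small_ball_expansion_general {s δ : ℝ} (hs : 0 < s) (hs' : s < 1 / 2)
    (hδ : 0 < δ) :
    ∃ C > 0, ∀ Ω : Set E, MeasurableSet Ω → ∀ ε : ℝ, 0 < ε → ε < δ / 2 →
      ∀ x : E, ball (ε • x) δ ⊆ Ω →
        |kernelInteraction μ (finrank ℝ E + 2 * s) (ball x 1) (ε⁻¹ • Ω \ ball x 1) -
            kernelInteraction μ (finrank ℝ E + 2 * s) (ball x 1) (univ \ ball x 1) +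
            μ.real (ball 0 1) * ε ^ (2 * s) *
              kernelPotential μ (finrank ℝ E + 2 * s) Ωᶜ (ε • x)| ≤
          C * ε ^ (1 + 2 * s) := by
  set p := finrank ℝ E + 2 * s
  set ω := μ.real (ball (0 : E) 1) with hω
  have hω₀ : 0 < ω := ENNReal.toReal_pos (measure_ball_pos μ 0 one_pos).ne' measure_ball_lt_top.ne
  have hd : (0 : ℝ) < finrank ℝ E := by exact_mod_cast finrank_pos
  refine ⟨p * 2 ^ (p + 1) * (finrank ℝ E * ω / (1 + 2 * s) * δ ^ (-(1 + 2 * s))) * ω,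
    by positivity, fun Ω hΩ ε hε hεδ x hx ↦ ?_⟩
  have one_le_half_radius : 1 ≤ δ / ε / 2 := by
    rw [div_right_comm, one_le_div hε]
    exact hεδ.le
  have expansion := abs_kernelInteraction_ball_sdiff_sub_univ_add_le (μ := μ) (p := p)
    (by linarith) (by linarith) (hΩ.const_smul₀ ε⁻¹) (div_pos hδ hε) zero_le_one
    one_le_half_radius (ball_div_subset_inv_smul hε hx)
  have sub_finrank : p - finrank ℝ E = 2 * s := add_sub_cancel_left _ _
  have error_scaling : (δ / ε) ^ (finrank ℝ E - (p + 1)) =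
      δ ^ (-(1 + 2 * s)) * ε ^ (1 + 2 * s) := by
    rw [show finrank ℝ E - (p + 1) = -(1 + 2 * s) by linarith, Real.div_rpow hδ.le hε.le,
      Real.rpow_neg hε.le, div_inv_eq_mul]
  rw [kernelPotential_compl_inv_smul p hε, Measure.addHaar_real_ball_center, ← hω, sub_finrank,
    error_scaling, ← mul_assoc, show p + 1 - finrank ℝ E = 1 + 2 * s by linarith] at expansion
  exact expansion.trans_eq (by ring)

end KernelPotential

/-- expansion of the relative fractional perimeter of small balls:
`P_s(B_1(x̄), Ω/ε) = P_s(B_1(x̄)) - ω_N ε^{2s} V_Ω(ε x̄) + O(ε^{1+2s})`, uniformly for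
`ε x̄` in a compact subset `Θ` of `Ω`. -/
theorem relPerimeter_small_ball_expansion
    (hN : 0 < N) (hs : 0 < s) (hs' : s < 1/2)
    (Ω Θ : Set (EuclideanSpace ℝ (Fin N))) (hΩo : IsOpen Ω)
    (hΩb : Bornology.IsBounded Ω) (hΘ : IsCompact Θ) (hΘΩ : Θ ⊆ Ω) :
    ∃ C > 0, ∃ ε₀ > 0, ∀ ε : ℝ, 0 < ε → ε < ε₀ →
      ∀ xb : EuclideanSpace ℝ (Fin N), ε • xb ∈ Θ →
        |relPerimeterR N s (Metric.ball xb 1) (ε⁻¹ • Ω) -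
            relPerimeterR N s (Metric.ball xb 1) Set.univ +
            (volume (Metric.ball (0 : EuclideanSpace ℝ (Fin N)) 1)).toReal *
              ε ^ (2*s) * nonlocalPotential N s Ω (ε • xb)| ≤
          C * ε ^ (1 + 2*s) := by
  obtain ⟨δ, hδ, hδΩ⟩ := hΘ.exists_thickening_subset_open hΩo hΘΩ
  have : Nonempty (Fin N) := ⟨⟨0, hN⟩⟩
  obtain ⟨C, hC, h⟩ := relPerimeter_small_ball_expansion_general
    (volume : Measure (EuclideanSpace ℝ (Fin N))) hs hs' hδ
  simp only [finrank_euclideanSpace_fin] at h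
  exact ⟨C, hC, δ / 2, half_pos hδ, fun ε hε hεδ x hx ↦
    h Ω hΩo.measurableSet ε hε hεδ x ((Metric.ball_subset_thickening hx δ).trans hδΩ)⟩
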